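/- arXiv:math/0411134 — 3 statements merged into one kernel-verified Lean document; each statement's English description precedes it below -/
import Mathlib

section
/- Let L be a lattice on Euclidean space E and v ∈ L. Then v is orthogonally decomposable if and only if there exists w ∈ L with w ≠ v, w ≠ −v, v − w ∈ 2L and ||v|| = ||w||. -/
open scoped RealInnerProductSpace

noncomputable section

abbrev Euc (n : ℕ) := EuclideanSpace ℝ (Fin n)

/-- A (full-rank) lattice on the euclidean space `Euc n`: a discrete `ℤ`-submodule
whose real span is everything. -/
def IsLattice {n : ℕ} (L : Submodule ℤ (Euc n)) : Prop :=
  DiscreteTopology L ∧ Submodule.span ℝ (L : Set (Euc n)) = ⊤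

/-- `v` is orthogonally decomposable in `L`: `v = x + y` with `x, y ∈ L \ {0}`
and `(x,y) = 0`. -/
def OrthDecomp {n : ℕ} (L : Submodule ℤ (Euc n)) (v : Euc n) : Prop :=
  ∃ x y : Euc n, x ∈ L ∧ y ∈ L ∧ x ≠ 0 ∧ y ≠ 0 ∧ v = x + y ∧ ⟪x, y⟫ = 0

/-- `v` is acutely decomposable in `L`: `v = x + y` with `x, y ∈ L \ {0}`
and `(x,y) ≥ 0`. -/
def AcuteDecomp {n : ℕ} (L : Submodule ℤ (Euc n)) (v : Euc n) : Prop :=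
  ∃ x y : Euc n, x ∈ L ∧ y ∈ L ∧ x ≠ 0 ∧ y ≠ 0 ∧ v = x + y ∧ 0 ≤ ⟪x, y⟫

/-- `v` is (linearly) decomposable in `L`: `v = x + y` with `x, y ∈ L` and
`‖v‖ > ‖x‖ ≥ ‖y‖`. -/
def LinDecomp {n : ℕ} (L : Submodule ℤ (Euc n)) (v : Euc n) : Prop :=
  ∃ x y : Euc n, x ∈ L ∧ y ∈ L ∧ v = x + y ∧ ‖x‖ < ‖v‖ ∧ ‖y‖ ≤ ‖x‖

/-- The sublattice `2L = {2 x | x ∈ L}`. -/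
def double {n : ℕ} (L : Submodule ℤ (Euc n)) : Submodule ℤ (Euc n) :=
  Submodule.map ((2 : ℤ) • (LinearMap.id : Euc n →ₗ[ℤ] Euc n)) L

/-!
The orthogonal decompositions `v = x + y` correspond to the vectors `w` through `w = x - y`:
then `v - w = 2 y`, the cases `w = v` and `w = -v` are `y = 0` and `x = 0`, and `‖v‖ = ‖w‖` says
that the diagonals of the parallelogram on `x` and `y` have equal length, that is, `x ⟂ y`.
-/

section TorsionFree

variable {G : Type*}

theorem sub_eq_add_iff_eq_zero [AddGroup G] [IsAddTorsionFree G] {x y : G} :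
    x - y = x + y ↔ y = 0 := by
  rw [sub_eq_add_neg, add_right_inj, neg_eq_self]

theorem sub_eq_neg_add_iff_eq_zero [AddCommGroup G] [IsAddTorsionFree G] {x y : G} :
    x - y = -(x + y) ↔ x = 0 := by
  rw [neg_add, sub_eq_add_neg, add_left_inj, self_eq_neg]

end TorsionFree

section InnerProductSpace

variable {E : Type*} [SeminormedAddCommGroup E] [InnerProductSpace ℝ E]

theorem norm_add_eq_norm_sub_iff_inner_eq_zero {x y : E} :
    ‖x + y‖ = ‖x - y‖ ↔ ⟪x, y⟫ = 0 := by
  rw [← sq_eq_sq₀ (norm_nonneg _) (norm_nonneg _), norm_add_sq_real, norm_sub_sq_real]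
  constructor <;> intro h <;> linarith

theorem orthDecomp_iff_general (L : AddSubgroup E) (v : E) :
    (∃ x y : E, x ∈ L ∧ y ∈ L ∧ x ≠ 0 ∧ y ≠ 0 ∧ v = x + y ∧ ⟪x, y⟫ = 0) ↔
      ∃ w ∈ L, w ≠ v ∧ w ≠ -v ∧ (∃ z ∈ L, v - w = 2 • z) ∧ ‖v‖ = ‖w‖ := by
  have : IsAddTorsionFree E := .of_isTorsionFree ℝ E
  constructor
  · rintro ⟨x, y, hx, hy, hx0, hy0, rfl, hxy⟩
    exact ⟨x - y, L.sub_mem hx hy, sub_eq_add_iff_eq_zero.not.2 hy0,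
      sub_eq_neg_add_iff_eq_zero.not.2 hx0, ⟨y, hy, by abel⟩,
      norm_add_eq_norm_sub_iff_inner_eq_zero.2 hxy⟩
  · rintro ⟨w, hw, hwv, hwnv, ⟨y, hy, hvw⟩, hnorm⟩
    obtain ⟨x, rfl⟩ : ∃ x, w = x - y := ⟨w + y, by abel⟩
    obtain rfl : v = x + y := by rw [sub_eq_iff_eq_add.1 hvw]; abel
    have hx : x ∈ L := by simpa using L.add_mem hw hy
    exact ⟨x, y, hx, hy, sub_eq_neg_add_iff_eq_zero.not.1 hwnv,
      sub_eq_add_iff_eq_zero.not.1 hwv, rfl, norm_add_eq_norm_sub_iff_inner_eq_zero.1 hnorm⟩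

end InnerProductSpace

theorem mem_double_iff {n : ℕ} {L : Submodule ℤ (Euc n)} {u : Euc n} :
    u ∈ double L ↔ ∃ z ∈ L, u = 2 • z := by
  simp only [double, Submodule.mem_map, LinearMap.smul_apply, LinearMap.id_apply, ofNat_zsmul,
    eq_comm]

/-- O'Meara 3.6. `v ∈ L` is orthogonally decomposable iff there is
`w ∈ L` with `w ≠ ±v`, `v - w ∈ 2L` and `‖v‖ = ‖w‖`. -/
theorem orthDecomp_iff {n : ℕ} (L : Submodule ℤ (Euc n)) (hL : IsLattice L)
    (v : Euc n) (hv : v ∈ L) :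
    OrthDecomp L v ↔ ∃ w ∈ L, w ≠ v ∧ w ≠ -v ∧ v - w ∈ double L ∧ ‖v‖ = ‖w‖ := by
  simpa only [OrthDecomp, mem_double_iff, Submodule.mem_toAddSubgroup] using
    orthDecomp_iff_general L.toAddSubgroup v
end
end

section
/- Let L be a lattice on Euclidean space E and v ∈ L. Then v is acutely decomposable if and only if there exists w ∈ L with w ≠ v, w ≠ −v, v − w ∈ 2L and ||v|| ≥ ||w||. -/
open scoped RealInnerProductSpace

noncomputable section

section AddTorsionFree

variable {G : Type*} [AddCommGroup G] [IsAddTorsionFree G] {x y : G}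

theorem sub_eq_add_iff_right_eq_zero : x - y = x + y ↔ y = 0 := by
  rw [sub_eq_add_neg, add_right_inj, neg_eq_self]

theorem sub_eq_neg_add_iff_left_eq_zero : x - y = -(x + y) ↔ x = 0 := by
  rw [neg_add, ← sub_eq_add_neg, sub_left_inj, self_eq_neg]

end AddTorsionFree

section InnerProductSpace

variable {E : Type*} [SeminormedAddCommGroup E] [InnerProductSpace ℝ E]

theorem norm_sub_le_norm_add_iff_inner_nonneg {x y : E} : ‖x - y‖ ≤ ‖x + y‖ ↔ 0 ≤ ⟪x, y⟫ := by
  rw [← sq_le_sq₀ (norm_nonneg _) (norm_nonneg _), norm_sub_sq_real, norm_add_sq_real]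
  constructor <;> intro h <;> linarith

/-- The two sides correspond under the substitution `v = x + y`, `w = x - y`. -/
theorem acuteDecomp_iff_general (L : Submodule ℤ E) {v : E} (hv : v ∈ L) :
    (∃ x y : E, x ∈ L ∧ y ∈ L ∧ x ≠ 0 ∧ y ≠ 0 ∧ v = x + y ∧ 0 ≤ ⟪x, y⟫) ↔
      ∃ w ∈ L, w ≠ v ∧ w ≠ -v ∧ (∃ y ∈ L, (2 : ℤ) • y = v - w) ∧ ‖w‖ ≤ ‖v‖ := by
  have : IsAddTorsionFree E := .of_isTorsionFree ℝ E
  constructor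
  · rintro ⟨x, y, hx, hy, hx0, hy0, rfl, hxy⟩
    exact ⟨x - y, L.sub_mem hx hy, mt sub_eq_add_iff_right_eq_zero.1 hy0,
      mt sub_eq_neg_add_iff_left_eq_zero.1 hx0, ⟨y, hy, by module⟩,
      norm_sub_le_norm_add_iff_inner_nonneg.2 hxy⟩
  · rintro ⟨w, -, hwv, hw_neg, ⟨y, hy, hvw⟩, hle⟩
    obtain ⟨x, rfl⟩ : ∃ x, v = x + y := ⟨v - y, (sub_add_cancel v y).symm⟩
    obtain rfl : w = x - y := by
      rw [← sub_sub_cancel (x + y) w, ← hvw]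
      module
    exact ⟨x, y, (L.add_mem_iff_left hy).1 hv, hy, mt sub_eq_neg_add_iff_left_eq_zero.2 hw_neg,
      mt sub_eq_add_iff_right_eq_zero.2 hwv, rfl, norm_sub_le_norm_add_iff_inner_nonneg.1 hle⟩

end InnerProductSpace

/-- O'Meara 3.7. `v ∈ L` is acutely decomposable iff there is
`w ∈ L` with `w ≠ ±v`, `v - w ∈ 2L` and `‖v‖ ≥ ‖w‖`. -/
theorem acuteDecomp_iff {n : ℕ} (L : Submodule ℤ (Euc n)) (hL : IsLattice L)
    (v : Euc n) (hv : v ∈ L) :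
    AcuteDecomp L v ↔ ∃ w ∈ L, w ≠ v ∧ w ≠ -v ∧ v - w ∈ double L ∧ ‖w‖ ≤ ‖v‖ :=
  acuteDecomp_iff_general L hv
end
end

section
/- Let L be a lattice of full rank n on Euclidean space E with minimum M = min{||v|| : v ∈ L, v ≠ 0}, and let S ⊆ L be a minimal generating system of L whose vectors all have norm at most B ∈ ℝ. Then |S| ≤ n + log₂(n!·(B/M)^n). -/
open scoped RealInnerProductSpace

noncomputable section

/-!
Choose an `ℝ`-basis `b ⊆ S` of the space. Adding the remaining elements of `S` to `b` one at a time
gives a chain of lattices from `span ℤ b` to `L`; minimality of `S` makes every step strict, hence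
of index at least `2`, so `2 ^ (|S| - n) ≤ [L : span ℤ b] = covol (span ℤ b) / covol L`. Hadamard's
inequality bounds the numerator by `B ^ n`. Minkowski's convex body theorem for the cross-polytope
`{x | ∑ |xᵢ| < M}`, which has volume `(2 M) ^ n / n!` and lies in the open ball of radius `M`,
bounds the denominator below by `M ^ n / n!`.
-/

open MeasureTheory

section Generators

theorem two_mul_relIndex_le_relIndex {G : Type*} [AddGroup G] {H K L : AddSubgroup G}
    (hHK : H ≤ K) (hKL : K < L) (hHL : H.relIndex L ≠ 0) :
    2 * H.relIndex K ≤ H.relIndex L := by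
  rw [← AddSubgroup.relIndex_mul_relIndex H K L hHK hKL.le] at hHL ⊢
  have h_ne_one : K.relIndex L ≠ 1 := mt AddSubgroup.relIndex_eq_one.1 hKL.not_ge
  have h_ne_zero : K.relIndex L ≠ 0 := right_ne_zero_of_mul hHL
  rw [mul_comm]
  exact Nat.mul_le_mul_left _ (by lia)

theorem two_pow_ncard_le_relIndex_closure_union {G : Type*} [AddGroup G] {s t : Set G}
    (ht : t.Finite) (hirr : ∀ v ∈ t, v ∉ AddSubgroup.closure (s ∪ t \ {v}))
    (hidx : (AddSubgroup.closure s).relIndex (AddSubgroup.closure (s ∪ t)) ≠ 0) :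
    2 ^ t.ncard ≤ (AddSubgroup.closure s).relIndex (AddSubgroup.closure (s ∪ t)) := by
  induction t, ht using Set.Finite.induction_on with
  | empty => simp
  | @insert v t hvt ht ih =>
    have h_union : s ∪ t ⊆ s ∪ insert v t := Set.union_subset_union_right s (Set.subset_insert v t)
    have h_lt : AddSubgroup.closure (s ∪ t) < AddSubgroup.closure (s ∪ insert v t) := by
      refine SetLike.lt_iff_le_and_exists.2 ⟨AddSubgroup.closure_mono h_union, v,
        AddSubgroup.subset_closure (Or.inr (Set.mem_insert v t)), ?_⟩
      simpa [hvt] using hirr v (Set.mem_insert v t)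
    have hirr' : ∀ w ∈ t, w ∉ AddSubgroup.closure (s ∪ t \ {w}) := fun w hw hmem ↦
      hirr w (Set.mem_insert_of_mem v hw) <| AddSubgroup.closure_mono
        (Set.union_subset_union_right s (Set.sdiff_subset_sdiff_left (Set.subset_insert v t))) hmem
    have hidx' := mt (AddSubgroup.relIndex_eq_zero_of_le_right h_lt.le) hidx
    calc 2 ^ (insert v t).ncard = 2 * 2 ^ t.ncard := by
          rw [Set.ncard_insert_of_notMem hvt ht, pow_succ']
      _ ≤ 2 * (AddSubgroup.closure s).relIndex (AddSubgroup.closure (s ∪ t)) :=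
          Nat.mul_le_mul_left 2 (ih hirr' hidx')
      _ ≤ _ := two_mul_relIndex_le_relIndex
          (AddSubgroup.closure_mono Set.subset_union_left) h_lt hidx

theorem notMem_span_sdiff_singleton_of_minimal {R V : Type*} [Semiring R] [AddCommMonoid V]
    [Module R V] {N : Submodule R V} {s : Set V} (hs : Minimal (fun s ↦ Submodule.span R s = N) s)
    {v : V} (hv : v ∈ s) : v ∉ Submodule.span R (s \ {v}) := fun hmem ↦
  hs.notMem_of_prop_sdiff_singleton (by
    rw [← Submodule.span_insert_eq_span hmem, Set.insert_sdiff_singleton,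
      Set.insert_eq_of_mem hv, hs.prop]) hv

theorem two_pow_ncard_sdiff_le_relIndex_of_minimal {A : Type*} [AddCommGroup A]
    {N : Submodule ℤ A} {s t : Set A} (hs : Minimal (fun s ↦ Submodule.span ℤ s = N) s)
    (hts : t ⊆ s) (hfin : (s \ t).Finite)
    (hidx : (Submodule.span ℤ t).toAddSubgroup.relIndex N.toAddSubgroup ≠ 0) :
    2 ^ (s \ t).ncard ≤ (Submodule.span ℤ t).toAddSubgroup.relIndex N.toAddSubgroup := by
  have h_closure : AddSubgroup.closure (t ∪ s \ t) = N.toAddSubgroup := by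
    rw [Set.union_sdiff_cancel hts, ← Submodule.span_int_eq_addSubgroupClosure, hs.prop]
  have hirr : ∀ v ∈ s \ t, v ∉ AddSubgroup.closure (t ∪ (s \ t) \ {v}) := by
    intro v hv hmem
    refine notMem_span_sdiff_singleton_of_minimal hs hv.1 ?_
    rw [← Submodule.mem_toAddSubgroup, Submodule.span_int_eq_addSubgroupClosure]
    refine AddSubgroup.closure_mono (Set.union_subset ?_ ?_) hmem
    · exact Set.subset_sdiff_singleton hts hv.2
    · exact Set.sdiff_subset_sdiff_left Set.sdiff_subset
  rw [Submodule.span_int_eq_addSubgroupClosure, ← h_closure] at hidx ⊢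
  exact two_pow_ncard_le_relIndex_closure_union hfin hirr hidx

end Generators

section CrossPolytope

variable {ι E : Type*} [Fintype ι]

/-- The `ℓ¹` norm of the coordinates in a basis `b`. Its balls centred at the origin are the
cross-polytopes with vertices on the axes spanned by `b`; as balls of a seminorm they are
convex and symmetric. -/
def l1Seminorm [AddCommGroup E] [Module ℝ E] (b : Module.Basis ι ℝ E) : Seminorm ℝ E :=
  (normSeminorm ℝ (PiLp 1 fun _ : ι ↦ ℝ)).comp
    ((WithLp.linearEquiv 1 ℝ (ι → ℝ)).symm.toLinearMap ∘ₗ b.equivFun.toLinearMap)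

theorem l1Seminorm_apply [AddCommGroup E] [Module ℝ E] (b : Module.Basis ι ℝ E) (x : E) :
    l1Seminorm b x = ∑ i, |b.repr x i| := by
  simp [l1Seminorm, PiLp.norm_eq_of_L1]

variable [NormedAddCommGroup E] [InnerProductSpace ℝ E]

theorem norm_le_l1Seminorm (b : OrthonormalBasis ι ℝ E) (x : E) : ‖x‖ ≤ l1Seminorm b.toBasis x :=
  calc ‖x‖ = ‖∑ i, b.repr x i • b i‖ := by rw [b.sum_repr]
    _ ≤ ∑ i, ‖b.repr x i • b i‖ := norm_sum_le _ _
    _ = l1Seminorm b.toBasis x := by simp [l1Seminorm_apply, norm_smul]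

theorem volume_real_l1Seminorm_ball [Nonempty ι] [FiniteDimensional ℝ E] [MeasurableSpace E]
    [BorelSpace E] (b : OrthonormalBasis ι ℝ E) {r : ℝ} (hr : 0 ≤ r) :
    volume.real ((l1Seminorm b.toBasis).ball 0 r) =
      r ^ Fintype.card ι * (2 ^ Fintype.card ι / (Fintype.card ι).factorial) := by
  let coord : E ≃ᵐ (ι → ℝ) := b.measurableEquiv.trans (MeasurableEquiv.toLp 2 (ι → ℝ)).symm
  have h_coord : MeasurePreserving coord :=
    (EuclideanSpace.volume_preserving_symm_measurableEquiv_toLp ι).comp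
      b.measurePreserving_measurableEquiv
  have h_ball : (l1Seminorm b.toBasis).ball 0 r =
      coord ⁻¹' {y | (∑ i, |y i| ^ (1 : ℝ)) ^ (1 / (1 : ℝ)) < r} := by
    ext x
    simp [l1Seminorm_apply, coord, OrthonormalBasis.measurableEquiv]
  rw [measureReal_def, h_ball, h_coord.measure_preimage_equiv, volume_sum_rpow_lt ι le_rfl]
  simp only [div_one, one_add_one_eq_two, Real.Gamma_two, mul_one, Real.Gamma_nat_eq_factorial,
    ENNReal.toReal_mul, ENNReal.toReal_pow, ENNReal.toReal_ofReal hr]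
  rw [ENNReal.toReal_ofReal (by positivity)]

end CrossPolytope

theorem finite_of_isBounded_of_subset_discrete {E : Type*} [NormedAddCommGroup E] [ProperSpace E]
    {L : AddSubgroup E} [DiscreteTopology L] {s : Set E} (hs : Bornology.IsBounded s)
    (hsL : s ⊆ L) : s.Finite := by
  rw [← Set.inter_eq_left.2 hsL]
  exact Metric.finite_isBounded_inter_isClosed DiscreteTopology.isDiscrete hs
    AddSubgroup.isClosed_of_discrete

theorem exists_ne_zero_mem_of_covolume_mul_two_pow_lt {E : Type*} [NormedAddCommGroup E]
    [NormedSpace ℝ E] [FiniteDimensional ℝ E] [MeasurableSpace E] [BorelSpace E]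
    (μ : Measure E) [μ.IsAddHaarMeasure]
    (L : Submodule ℤ E) [DiscreteTopology L] [IsZLattice ℝ L] {s : Set E}
    (h_symm : ∀ x ∈ s, -x ∈ s) (h_conv : Convex ℝ s)
    (h : ZLattice.covolume L μ * 2 ^ Module.finrank ℝ E < μ.real s) :
    ∃ x ∈ L, x ≠ 0 ∧ x ∈ s := by
  have h_fund := ZLattice.isAddFundamentalDomain (Module.Free.chooseBasis ℤ L) μ
  have h_finite : μ (ZSpan.fundamentalDomain
      ((Module.Free.chooseBasis ℤ L).ofZLatticeBasis ℝ)) * 2 ^ Module.finrank ℝ E ≠ ⊤ :=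
    ENNReal.mul_ne_top (ZSpan.fundamentalDomain_isBounded _).measure_lt_top.ne (by finiteness)
  rw [ZLattice.covolume_eq_measure_fundamentalDomain L μ h_fund] at h
  have h_measure := lt_of_not_ge fun hle ↦ h.not_ge <| by
    simpa [measureReal_def] using ENNReal.toReal_mono h_finite hle
  have : Countable L.toAddSubgroup := inferInstanceAs (Countable L)
  obtain ⟨x, hx_ne, hxs⟩ := exists_ne_zero_mem_lattice_of_measure_mul_two_pow_lt_measure
    (L := L.toAddSubgroup) h_fund h_symm h_conv h_measure
  exact ⟨x, x.2, by simpa using hx_ne, hxs⟩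

section Covolume

variable {E : Type*} [NormedAddCommGroup E] [InnerProductSpace ℝ E] [FiniteDimensional ℝ E]
  [MeasurableSpace E] [BorelSpace E]

theorem pow_finrank_le_factorial_mul_covolume [Nontrivial E] (L : Submodule ℤ E)
    [DiscreteTopology L] [IsZLattice ℝ L] {M : ℝ} (hM₀ : 0 ≤ M)
    (hM : ∀ v ∈ L, v ≠ 0 → M ≤ ‖v‖) :
    M ^ Module.finrank ℝ E ≤ (Module.finrank ℝ E).factorial * ZLattice.covolume L := by
  let p := l1Seminorm (stdOrthonormalBasis ℝ E).toBasis
  have : Nonempty (Fin (Module.finrank ℝ E)) := ⟨0, Module.finrank_pos⟩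
  by_contra! h_lt
  have h_volume : ZLattice.covolume L * 2 ^ Module.finrank ℝ E < volume.real (p.ball 0 M) := by
    rw [volume_real_l1Seminorm_ball _ hM₀, Fintype.card_fin, mul_div_left_comm, mul_comm]
    gcongr
    rwa [lt_div_iff₀' (by positivity)]
  obtain ⟨v, hvL, hv_ne, hv_ball⟩ := exists_ne_zero_mem_of_covolume_mul_two_pow_lt volume L
    (fun x hx ↦ p.neg_mem_ball_zero.2 hx) (p.convex_ball 0 M) h_volume
  have h_norm_lt : ‖v‖ < M := (norm_le_l1Seminorm _ v).trans_lt (p.mem_ball_zero.1 hv_ball)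
  exact h_norm_lt.not_ge (hM v hvL hv_ne)

theorem covolume_span_range_basis_le_prod_norm {ι : Type*} [Fintype ι] (b : Module.Basis ι ℝ E) :
    ZLattice.covolume (Submodule.span ℤ (Set.range b)) ≤ ∏ i, ‖b i‖ := by
  classical
  let n := Module.finrank ℝ E
  have : Fact (Module.finrank ℝ E = n) := ⟨rfl⟩
  let e : ι ≃ Fin n := Fintype.equivFinOfCardEq (Module.finrank_eq_card_basis b).symm
  let b₀ : OrthonormalBasis (Fin n) ℝ E := stdOrthonormalBasis ℝ E
  have h_unit : volume.real (ZSpan.fundamentalDomain b₀.toBasis) = 1 := by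
    rw [measureReal_congr (ZSpan.fundamentalDomain_ae_parallelepiped b₀.toBasis volume),
      measureReal_def, b₀.coe_toBasis, b₀.volume_parallelepiped, ENNReal.toReal_one]
  calc ZLattice.covolume (Submodule.span ℤ (Set.range b))
      = ZLattice.covolume (Submodule.span ℤ (Set.range (b.reindex e))) := by rw [b.range_reindex]
    _ = volume.real (ZSpan.fundamentalDomain (b.reindex e)) :=
        ZLattice.covolume_eq_measure_fundamentalDomain _ _ (ZSpan.isAddFundamentalDomain _ _)
    _ = |b₀.toBasis.orientation.volumeForm (b.reindex e)| := by
        rw [ZSpan.measureReal_fundamentalDomain _ volume b₀.toBasis, h_unit, mul_one,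
          Orientation.volumeForm_robust' _ b₀]
    _ ≤ ∏ i, ‖b.reindex e i‖ := Orientation.abs_volumeForm_apply_le _ _
    _ = ∏ i, ‖b i‖ := by simpa using e.symm.prod_comp fun i ↦ ‖b i‖

theorem relIndex_ne_zero_of_isZLattice {L₁ L₂ : Submodule ℤ E} [DiscreteTopology L₁]
    [IsZLattice ℝ L₁] [DiscreteTopology L₂] [IsZLattice ℝ L₂] (h : L₁ ≤ L₂) :
    L₁.toAddSubgroup.relIndex L₂.toAddSubgroup ≠ 0 := by
  rw [← Nat.cast_ne_zero (R := ℝ), ← ZLattice.covolume_div_covolume_eq_relIndex' L₁ L₂ h]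
  exact div_ne_zero (ZLattice.covolume_ne_zero L₁) (ZLattice.covolume_ne_zero L₂)

theorem relIndex_span_range_basis_le [Nontrivial E] {L : Submodule ℤ E} [DiscreteTopology L]
    [IsZLattice ℝ L] {ι : Type*} [Finite ι] {b : Module.Basis ι ℝ E} (hbL : Set.range b ⊆ L)
    {M B : ℝ} (hM₀ : 0 < M) (hM : ∀ v ∈ L, v ≠ 0 → M ≤ ‖v‖) (hB : ∀ i, ‖b i‖ ≤ B) :
    ((Submodule.span ℤ (Set.range b)).toAddSubgroup.relIndex L.toAddSubgroup : ℝ) ≤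
      (Module.finrank ℝ E).factorial * (B / M) ^ Module.finrank ℝ E := by
  have := Fintype.ofFinite ι
  set n := Module.finrank ℝ E
  have h_upper : ZLattice.covolume (Submodule.span ℤ (Set.range b)) ≤ B ^ n :=
    calc _ ≤ ∏ i, ‖b i‖ := covolume_span_range_basis_le_prod_norm b
      _ ≤ ∏ _i : ι, B := Finset.prod_le_prod (fun i _ ↦ norm_nonneg (b i)) fun i _ ↦ hB i
      _ = B ^ n := by rw [Finset.prod_const, Finset.card_univ, ← Module.finrank_eq_card_basis b]
  have h_lower : M ^ n / n.factorial ≤ ZLattice.covolume L := by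
    rw [div_le_iff₀' (by positivity)]
    exact pow_finrank_le_factorial_mul_covolume L hM₀.le hM
  have h_pos := ZLattice.covolume_pos (Submodule.span ℤ (Set.range b))
  rw [← ZLattice.covolume_div_covolume_eq_relIndex' _ L (Submodule.span_le.2 hbL)]
  calc _ ≤ B ^ n / (M ^ n / n.factorial) :=
        div_le_div₀ (h_pos.le.trans h_upper) h_upper (by positivity) h_lower
    _ = n.factorial * (B / M) ^ n := by rw [div_pow]; field_simp

end Covolume

theorem covering_theorem_general {E : Type*} [NormedAddCommGroup E] [InnerProductSpace ℝ E]
    [FiniteDimensional ℝ E] (L : Submodule ℤ E) [DiscreteTopology L] [IsZLattice ℝ L]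
    {M B : ℝ} (hM : IsLeast {r : ℝ | ∃ v ∈ L, v ≠ 0 ∧ ‖v‖ = r} M)
    {S : Set E} (hSB : ∀ v ∈ S, ‖v‖ ≤ B) (hS : Minimal (fun S ↦ Submodule.span ℤ S = L) S) :
    S.Finite ∧ (S.ncard : ℝ) ≤ Module.finrank ℝ E +
      Real.logb 2 ((Module.finrank ℝ E).factorial * (B / M) ^ Module.finrank ℝ E) := by
  let _ : MeasurableSpace E := borel E
  have : BorelSpace E := ⟨rfl⟩
  obtain ⟨⟨v, -, hv_ne, hvM⟩, hM_le⟩ := hM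
  have : Nontrivial E := ⟨v, 0, hv_ne⟩
  have hM₀ : 0 < M := hvM ▸ norm_pos_iff.2 hv_ne
  have hSL : S ⊆ L := hS.prop ▸ Submodule.subset_span
  have hS_finite : S.Finite := finite_of_isBounded_of_subset_discrete (L := L.toAddSubgroup)
    (isBounded_iff_forall_norm_le.2 ⟨B, hSB⟩) hSL
  have hS_span : Submodule.span ℝ S = ⊤ := by
    rw [← Submodule.span_span_of_tower ℤ, hS.prop, IsZLattice.span_top]
  let b := Module.Basis.ofSpan hS_span.ge
  have hbS : Set.range b ⊆ S := Module.Basis.ofSpan_subset hS_span.ge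
  have := Module.Finite.finite_basis b
  have h_card : (S \ Set.range b).ncard + Module.finrank ℝ E = S.ncard := by
    rw [Module.finrank_eq_nat_card_basis b, ← Nat.card_range_of_injective b.injective,
      Nat.card_coe_set_eq, Set.ncard_sdiff_add_ncard_of_subset hbS hS_finite]
  have h_lower := two_pow_ncard_sdiff_le_relIndex_of_minimal hS hbS hS_finite.sdiff
    (relIndex_ne_zero_of_isZLattice (Submodule.span_le.2 (hbS.trans hSL)))
  have h_upper := relIndex_span_range_basis_le (hbS.trans hSL) hM₀
    (fun w hwL hw ↦ hM_le ⟨w, hwL, hw, rfl⟩) fun i ↦ hSB _ (hbS ⟨i, rfl⟩)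
  have h_pow : (2 : ℝ) ^ (S \ Set.range b).ncard ≤
      (Module.finrank ℝ E).factorial * (B / M) ^ Module.finrank ℝ E :=
    le_trans (mod_cast h_lower) h_upper
  refine ⟨hS_finite, ?_⟩
  rw [← h_card, Nat.cast_add, add_comm, add_le_add_iff_left,
    Real.le_logb_iff_rpow_le one_lt_two ((by positivity : (0 : ℝ) < 2 ^ _).trans_le h_pow),
    Real.rpow_natCast]
  exact h_pow

/-- covering theorem. Let `L` be a lattice of full rank `n` with
minimum `M` and let `S` be a minimal generating system of `L` all of whose vectors
have norm at most `B`.  Then `S` is finite with `|S| ≤ n + log₂(n! (B/M)^n)`. -/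
theorem covering_theorem {n : ℕ} (L : Submodule ℤ (Euc n)) (hL : IsLattice L)
    (M B : ℝ) (hM : IsLeast {r : ℝ | ∃ v ∈ L, v ≠ 0 ∧ ‖v‖ = r} M)
    (S : Set (Euc n)) (hSB : ∀ v ∈ S, ‖v‖ ≤ B)
    (hSspan : Submodule.span ℤ S = L)
    (hmin : ∀ S' : Set (Euc n), S' ⊂ S → Submodule.span ℤ S' < L) :
    S.Finite ∧ (S.ncard : ℝ) ≤ n + Real.logb 2 ((n.factorial : ℝ) * (B / M) ^ n) := by
  have := hL.1
  have : IsZLattice ℝ L := ⟨hL.2⟩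
  simpa using covering_theorem_general L hM hSB
    (Set.minimal_iff_forall_ssubset.2 ⟨hSspan, fun S' hS' ↦ (hmin S' hS').ne⟩)
end
end
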